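/- Let α be a transition rate function on [d] in (D-Lip). For μ, ν ∈ S_d let m^{(1)}(t, μ, ν) be the solution of the linearized Kolmogorov Cauchy problem q'(t) = L_{m(t;μ)} q(t), q(0) = ν − μ. Then for every t ≥ 0, μ ∈ S_d and z ∈ [d], the linear functional derivative of the measure flow exists and equals δm/δm(t, μ, z) = m^{(1)}(t, μ, δ_z). -/

import Mathlib

/-!
The heart of the matter is that a function in (D-Lip) is differentiable on the closed simplex with
a quadratic remainder (`taylor`), although the hypothesis only gives one-sided derivatives towards
the vertices. The mean value inequality for right derivatives makes the error towards a vertex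
uniformly `O(ε²)` (`vertex_taylor`). A step of size `ε` towards `ν = ∑ ν_z δ_z` agrees up to
`O(ε²)` with successive steps of size `ε ν_z` towards the vertices, so the derivative towards `ν`
is `∑ ν_z δF/δm(μ, z)` (`partial_taylor`, `dir_deriv`). Taking `ν = μ` shows that the derivative is
centred, and the mean value inequality along `[μ, ν]` then gives `taylor`.

Hence `L_η` is the derivative of the vector field `η ↦ η α(η)` with quadratic remainder
(`field_taylor`). Let `μ_ε = (1 - ε) μ + ε δ_z` and `q = m⁽¹⁾(·, μ, δ_z)`. Grönwall's inequality
gives `m(t; μ_ε) - m(t; μ) = O(ε)` on `[0, T]`, so `e = m(·; μ_ε) - m(·; μ) - ε q` satisfies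
`e' = L_{m(t; μ)} e + O(ε²)` and `e(0) = 0`; a second application gives `e = O(ε²)`.

All estimates use the sup norm, which is equivalent to the `ℓ¹` norm.
-/

open Finset Filter Topology

/-- The simplex of probability vectors on `Fin d`. -/
def simplex (d : ℕ) : Set (Fin d → ℝ) :=
  {μ | (∀ z, 0 ≤ μ z) ∧ ∑ z, μ z = 1}

/-- The ℓ¹ norm on `Fin d → ℝ`. -/
def l1 {d : ℕ} (v : Fin d → ℝ) : ℝ := ∑ z, |v z|

/-- The `z`-th standard basis vector (Dirac measure at `z`). -/
def bvec {d : ℕ} (z : Fin d) : Fin d → ℝ := fun y => if y = z then 1 else 0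

/-- Linear functional derivative: `δF/δm (μ, z) = v`. -/
def HasLFDerivAt {d : ℕ} (F : (Fin d → ℝ) → ℝ) (μ : Fin d → ℝ) (z : Fin d) (v : ℝ) : Prop :=
  Filter.Tendsto (fun ε : ℝ => (F ((1 - ε) • μ + ε • bvec z) - F μ) / ε)
    (nhdsWithin 0 (Set.Ioi 0)) (nhds v)

/-- Directional derivative `D^m_{yz} F (μ) = v`. -/
def HasDmDerivAt {d : ℕ} (F : (Fin d → ℝ) → ℝ) (μ : Fin d → ℝ) (y z : Fin d) (v : ℝ) : Prop :=
  Filter.Tendsto (fun ε : ℝ => (F (μ + ε • (bvec z - bvec y)) - F μ) / ε)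
    (nhdsWithin 0 (Set.Ioi 0)) (nhds v)

/-- `α` is a transition rate function on `[d]`. -/
def IsRate (d : ℕ) (α : (Fin d → ℝ) → Matrix (Fin d) (Fin d) ℝ) : Prop :=
  ContinuousOn α (simplex d) ∧
  (∀ μ ∈ simplex d, ∀ x y, x ≠ y → 0 ≤ α μ x y) ∧
  (∀ μ ∈ simplex d, ∀ x, ∑ y, α μ x y = 0)

/-- `m` is the measure flow solving the nonlinear Kolmogorov equation for `α`. -/
def IsFlow {d : ℕ} (α : (Fin d → ℝ) → Matrix (Fin d) (Fin d) ℝ)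
    (m : ℝ → (Fin d → ℝ) → Fin d → ℝ) : Prop :=
  ∀ μ ∈ simplex d, m 0 μ = μ ∧ (∀ t, 0 ≤ t → m t μ ∈ simplex d) ∧
    ∀ t, 0 ≤ t → HasDerivAt (fun s => m s μ) (Matrix.vecMul (m t μ) (α (m t μ))) t

/-- A real-valued function on the simplex is in (D-Lip) with linear functional derivative `δF`. -/
def DLipR {d : ℕ} (F : (Fin d → ℝ) → ℝ) (δF : (Fin d → ℝ) → Fin d → ℝ) : Prop :=
  (∃ K : ℝ, ∀ μ ∈ simplex d, ∀ ν ∈ simplex d, |F μ - F ν| ≤ K * l1 (μ - ν)) ∧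
  (∀ μ ∈ simplex d, ∀ z, HasLFDerivAt F μ z (δF μ z)) ∧
  (∃ K : ℝ, ∀ μ ∈ simplex d, ∀ ν ∈ simplex d, l1 (δF μ - δF ν) ≤ K * l1 (μ - ν))

/-- The matrix-valued transition rate function is in (D-Lip), componentwise. -/
def DLipRate {d : ℕ} (α : (Fin d → ℝ) → Matrix (Fin d) (Fin d) ℝ)
    (δα : (Fin d → ℝ) → Fin d → Matrix (Fin d) (Fin d) ℝ) : Prop :=
  ∀ x y, DLipR (fun μ => α μ x y) (fun μ z => δα μ z x y)

/-- The ergodicity assumption (Erg) for the flow `m`, with derivative data `δm`. -/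
def Erg {d : ℕ} (m : ℝ → (Fin d → ℝ) → Fin d → ℝ)
    (δm : ℝ → (Fin d → ℝ) → Fin d → Fin d → ℝ) (lam c₁ k₁ : ℝ) : Prop :=
  0 < lam ∧ 0 < c₁ ∧ 0 < k₁ ∧
  (∀ t, 0 ≤ t → ∀ μ ∈ simplex d, ∀ μ' ∈ simplex d,
    l1 (m t μ - m t μ') ≤ c₁ * Real.exp (-lam * t) * l1 (μ - μ')) ∧
  (∀ t, 0 ≤ t → ∀ μ ∈ simplex d, ∀ z x, HasLFDerivAt (fun ν => m t ν x) μ z (δm t μ z x)) ∧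
  (∀ t, 0 ≤ t → ∀ μ ∈ simplex d, ∀ μ' ∈ simplex d, ∀ z,
    l1 (δm t μ z - δm t μ' z) ≤ k₁ * l1 (μ - μ'))

/-- Empirical measure of a configuration of `N` particles. -/
noncomputable def empMeas {d N : ℕ} (x : Fin N → Fin d) : Fin d → ℝ :=
  fun z => (∑ i, if x i = z then (1 : ℝ) else 0) / N

/-- Generator of the `N`-particle Markov chain. -/
noncomputable def genQ {d N : ℕ} (α : (Fin d → ℝ) → Matrix (Fin d) (Fin d) ℝ)
    (F : (Fin N → Fin d) → ℝ) (x : Fin N → Fin d) : ℝ :=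
  ∑ i, ∑ y ∈ Finset.univ.filter (fun y => y ≠ x i),
    α (empMeas x) (x i) y * (F (Function.update x i y) - F x)

/-- `p` is the law of the `N`-particle chain: a curve of probability vectors solving the
forward Kolmogorov equation (in weak form, tested against all functions). -/
def IsLaw {d N : ℕ} (α : (Fin d → ℝ) → Matrix (Fin d) (Fin d) ℝ)
    (p : ℝ → (Fin N → Fin d) → ℝ) : Prop :=
  (∀ t, 0 ≤ t → (∀ x, 0 ≤ p t x) ∧ (∑ x, p t x) = 1) ∧
  (∀ F : (Fin N → Fin d) → ℝ, ∀ t, 0 ≤ t →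
    HasDerivAt (fun s => ∑ x, p s x * F x) (∑ x, p t x * genQ α F x) t)

/-- The linearized Kolmogorov operator `L_η`. -/
def linOp {d : ℕ} (α : (Fin d → ℝ) → Matrix (Fin d) (Fin d) ℝ)
    (δα : (Fin d → ℝ) → Fin d → Matrix (Fin d) (Fin d) ℝ)
    (η q : Fin d → ℝ) : Fin d → ℝ :=
  Matrix.vecMul η (∑ z, q z • δα η z) + Matrix.vecMul q (α η)

/-- The linearized ergodicity assumption (Lin-Erg) with constants `lam`, `c₂`. -/
def LinErg {d : ℕ} (α : (Fin d → ℝ) → Matrix (Fin d) (Fin d) ℝ)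
    (δα : (Fin d → ℝ) → Fin d → Matrix (Fin d) (Fin d) ℝ)
    (m : ℝ → (Fin d → ℝ) → Fin d → ℝ) (lam c₂ : ℝ) : Prop :=
  ∀ μ ∈ simplex d, ∀ q₀ : Fin d → ℝ, (∑ z, q₀ z) = 0 →
    ∀ r : ℝ → Fin d → ℝ, Measurable r → (∃ Cb : ℝ, ∀ t, 0 ≤ t → l1 (r t) ≤ Cb) →
      (∀ t, 0 ≤ t → (∑ z, r t z) = 0) →
      ∀ q : ℝ → Fin d → ℝ, q 0 = q₀ →
        (∀ t, 0 ≤ t → HasDerivAt q (linOp α δα (m t μ) (q t) + r t) t) →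
        ∀ t, 0 ≤ t →
          l1 (q t) ≤ c₂ * (Real.exp (-lam * t) * l1 q₀ +
            ∫ s in (0:ℝ)..t, Real.exp (-lam * (t - s)) * l1 (r s))

/-! ### The simplex and the norms -/

theorem abs_apply_le {d : ℕ} (v : Fin d → ℝ) (z : Fin d) : |v z| ≤ ‖v‖ := norm_le_pi_norm v z

theorem l1_le_norm {d : ℕ} (v : Fin d → ℝ) : l1 v ≤ d * ‖v‖ := by
  unfold l1
  calc ∑ z, |v z| ≤ ∑ _z : Fin d, ‖v‖ := Finset.sum_le_sum fun z _ => abs_apply_le v z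
    _ = d * ‖v‖ := by simp

theorem abs_le_l1 {d : ℕ} (v : Fin d → ℝ) (z : Fin d) : |v z| ≤ l1 v :=
  Finset.single_le_sum (f := fun z => |v z|) (fun _ _ => abs_nonneg _) (Finset.mem_univ z)

theorem simplex_norm_le {d : ℕ} {μ : Fin d → ℝ} (h : μ ∈ simplex d) : ‖μ‖ ≤ 1 := by
  refine (pi_norm_le_iff_of_nonneg zero_le_one).2 fun z => ?_
  rw [Real.norm_eq_abs, abs_of_nonneg (h.1 z), ← h.2]
  exact Finset.single_le_sum (fun z _ => h.1 z) (Finset.mem_univ z)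

theorem simplex_sub_norm_le {d : ℕ} {μ ν : Fin d → ℝ} (h : μ ∈ simplex d) (h' : ν ∈ simplex d) :
    ‖μ - ν‖ ≤ 2 := by
  linarith [norm_sub_le μ ν, simplex_norm_le h, simplex_norm_le h']

theorem bvec_mem {d : ℕ} (z : Fin d) : bvec z ∈ simplex d := by
  refine ⟨fun y => ?_, by simp [bvec]⟩
  unfold bvec
  split_ifs <;> norm_num

theorem seg_mem {d : ℕ} {μ ν : Fin d → ℝ} (h : μ ∈ simplex d) (h' : ν ∈ simplex d) {s : ℝ}
    (h0 : 0 ≤ s) (h1 : s ≤ 1) : (1 - s) • μ + s • ν ∈ simplex d := by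
  refine ⟨fun z => ?_, ?_⟩
  · have := mul_nonneg (sub_nonneg.2 h1) (h.1 z)
    have := mul_nonneg h0 (h'.1 z)
    simp only [Pi.add_apply, Pi.smul_apply, smul_eq_mul]
    linarith
  · simp only [Pi.add_apply, Pi.smul_apply, smul_eq_mul, Finset.sum_add_distrib, ← Finset.mul_sum,
      h.2, h'.2]
    ring

theorem abs_sum_mul_le {d : ℕ} (u v : Fin d → ℝ) {A B : ℝ} (hA : 0 ≤ A) (hu : ∀ z, |u z| ≤ A)
    (hv : ∀ z, |v z| ≤ B) : |∑ z, u z * v z| ≤ d * (A * B) := by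
  calc |∑ z, u z * v z| ≤ ∑ z, |u z * v z| := Finset.abs_sum_le_sum_abs _ _
    _ ≤ ∑ _z : Fin d, A * B := Finset.sum_le_sum fun z _ => by
        rw [abs_mul]
        exact mul_le_mul (hu z) (hv z) (abs_nonneg _) hA
    _ = d * (A * B) := by simp

/-! ### The class (D-Lip) in the sup norm -/

/-- The class (D-Lip) with one constant `K` bounding everything, and the sup norm in place of the
`ℓ¹` norm. -/
structure DLipK {d : ℕ} (K : ℝ) (F : (Fin d → ℝ) → ℝ) (δF : (Fin d → ℝ) → Fin d → ℝ) : Prop where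
  nonneg : 0 ≤ K
  lip : ∀ μ ∈ simplex d, ∀ ν ∈ simplex d, |F μ - F ν| ≤ K * ‖μ - ν‖
  deriv : ∀ μ ∈ simplex d, ∀ z, HasLFDerivAt F μ z (δF μ z)
  lip' : ∀ μ ∈ simplex d, ∀ ν ∈ simplex d, ∀ z, |δF μ z - δF ν z| ≤ K * ‖μ - ν‖
  bdd : ∀ μ ∈ simplex d, ∀ z, |F μ| ≤ K ∧ |δF μ z| ≤ K

theorem DLipR.exists_dLipK {d : ℕ} {F : (Fin d → ℝ) → ℝ} {δF : (Fin d → ℝ) → Fin d → ℝ}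
    (h : DLipR F δF) : ∃ K₀, ∀ K, K₀ ≤ K → DLipK K F δF := by
  obtain ⟨⟨K₁, h1⟩, hD, ⟨K₂, h2⟩⟩ := h
  have key : ∀ K : ℝ, ∀ v : Fin d → ℝ, K * l1 v ≤ |K| * d * ‖v‖ := fun K v => by
    have h0 : 0 ≤ l1 v := Finset.sum_nonneg fun _ _ => abs_nonneg _
    calc K * l1 v ≤ |K| * l1 v := mul_le_mul_of_nonneg_right (le_abs_self K) h0
      _ ≤ |K| * (d * ‖v‖) := mul_le_mul_of_nonneg_left (l1_le_norm v) (abs_nonneg K)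
      _ = _ := by ring
  have hp : ∀ K : ℝ, 0 ≤ |K| * d := fun K => by positivity
  by_cases hne : (simplex d).Nonempty
  swap
  · rw [Set.not_nonempty_iff_eq_empty] at hne
    refine ⟨0, fun K hK => ⟨hK, ?_, ?_, ?_, ?_⟩⟩ <;> simp [hne]
  obtain ⟨μ₀, h₀⟩ := hne
  have hl0 : 0 ≤ l1 (δF μ₀) := Finset.sum_nonneg fun _ _ => abs_nonneg _
  have hF0 := abs_nonneg (F μ₀)
  refine ⟨2 * (|K₁| * d) + 2 * (|K₂| * d) + |F μ₀| + l1 (δF μ₀), fun K hK => ?_⟩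
  have a1 := hp K₁
  have a2 := hp K₂
  have l1' : ∀ μ ∈ simplex d, ∀ ν ∈ simplex d, |F μ - F ν| ≤ |K₁| * d * ‖μ - ν‖ :=
    fun μ hμ ν hν => (h1 μ hμ ν hν).trans (key _ _)
  have l2' : ∀ μ ∈ simplex d, ∀ ν ∈ simplex d, ∀ z, |δF μ z - δF ν z| ≤ |K₂| * d * ‖μ - ν‖ :=
    fun μ hμ ν hν z => (abs_le_l1 (δF μ - δF ν) z).trans ((h2 μ hμ ν hν).trans (key _ _))
  refine ⟨by linarith, ?_, hD, ?_, ?_⟩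
  · intro μ hμ ν hν
    exact (l1' μ hμ ν hν).trans (mul_le_mul_of_nonneg_right (by linarith) (norm_nonneg _))
  · intro μ hμ ν hν z
    exact (l2' μ hμ ν hν z).trans (mul_le_mul_of_nonneg_right (by linarith) (norm_nonneg _))
  · intro μ hμ z
    have hn := simplex_sub_norm_le hμ h₀
    have b1 := l1' μ hμ μ₀ h₀
    have b2 := l2' μ hμ μ₀ h₀ z
    have c1 := mul_le_mul_of_nonneg_left hn a1
    have c2 := mul_le_mul_of_nonneg_left hn a2
    have e1 := abs_sub_abs_le_abs_sub (F μ) (F μ₀)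
    have e2 := abs_sub_abs_le_abs_sub (δF μ z) (δF μ₀ z)
    have e3 := abs_le_l1 (δF μ₀) z
    constructor <;> linarith

/-! ### Taylor expansion on the simplex -/

/-- A step of size `ε` towards `ν` from the point with parameter `s` on the segment `[μ, ν]`
advances the parameter by `(1 - s) ε`; hence the factor `1 / (1 - s)` in the derivative. -/
theorem hasDerivWithinAt_seg {d : ℕ} {F : (Fin d → ℝ) → ℝ} {μ ν : Fin d → ℝ} {s c : ℝ}
    (hs : s < 1)
    (h : Tendsto (fun ε : ℝ => (F ((1 - ε) • ((1 - s) • μ + s • ν) + ε • ν)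
      - F ((1 - s) • μ + s • ν)) / ε) (𝓝[>] 0) (𝓝 c)) :
    HasDerivWithinAt (fun r : ℝ => F ((1 - r) • μ + r • ν)) (c / (1 - s)) (Set.Ici s) s := by
  have h1 : 0 < 1 - s := by linarith
  rw [← hasDerivWithinAt_Ioi_iff_Ici, hasDerivWithinAt_iff_tendsto_slope' (by simp)]
  have hφ : Tendsto (fun r : ℝ => (r - s) / (1 - s)) (𝓝[>] s) (𝓝[>] 0) := by
    refine tendsto_nhdsWithin_iff.2 ⟨?_, ?_⟩
    · have : Continuous fun r : ℝ => (r - s) / (1 - s) := by fun_prop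
      have h2 := this.tendsto s
      simp only [sub_self, zero_div] at h2
      exact h2.mono_left nhdsWithin_le_nhds
    · filter_upwards [self_mem_nhdsWithin] with r hr
      exact div_pos (sub_pos.2 hr) h1
  refine ((h.comp hφ).div_const (1 - s)).congr' ?_
  filter_upwards [self_mem_nhdsWithin] with r hr
  have hr' : r - s ≠ 0 := (sub_pos.2 hr).ne'
  have e : (1 - (r - s) / (1 - s)) • ((1 - s) • μ + s • ν) + ((r - s) / (1 - s)) • ν
      = (1 - r) • μ + r • ν := by
    ext x
    simp only [Pi.add_apply, Pi.smul_apply, smul_eq_mul]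
    field_simp
    ring
  simp only [Function.comp, e, slope_def_field]
  field_simp

/-- First-order Taylor estimate along a segment, from a bound on the variation of the one-sided
derivative. -/
theorem seg_taylor {d : ℕ} {K : ℝ} {F : (Fin d → ℝ) → ℝ} {δF : (Fin d → ℝ) → Fin d → ℝ}
    (hF : DLipK K F δF) {μ ν : Fin d → ℝ} (hμ : μ ∈ simplex d) (hν : ν ∈ simplex d)
    (g : (Fin d → ℝ) → ℝ)
    (hg : ∀ p ∈ simplex d, Tendsto (fun ε : ℝ => (F ((1 - ε) • p + ε • ν) - F p) / ε)
      (𝓝[>] 0) (𝓝 (g p)))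
    {ε c M : ℝ} (h0 : 0 ≤ ε) (h1 : ε ≤ 1)
    (hM : ∀ s, 0 ≤ s → s < ε → |g ((1 - s) • μ + s • ν) / (1 - s) - c| ≤ M) :
    |F ((1 - ε) • μ + ε • ν) - F μ - ε * c| ≤ M * ε := by
  have hcont : ContinuousOn (fun r : ℝ => F ((1 - r) • μ + r • ν)) (Set.Icc 0 ε) := by
    have hFc : ContinuousOn F (simplex d) := by
      refine (LipschitzOnWith.of_dist_le_mul (K := K.toNNReal) fun a ha b hb => ?_).continuousOn
      rw [Real.coe_toNNReal _ hF.nonneg, Real.dist_eq, dist_eq_norm]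
      exact hF.lip a ha b hb
    exact hFc.comp (by fun_prop) fun r hr => seg_mem hμ hν hr.1 (hr.2.trans h1)
  have := norm_image_sub_le_of_norm_deriv_right_le_segment
    (f := fun r : ℝ => F ((1 - r) • μ + r • ν) - r * c) (a := 0) (b := ε) (C := M)
    (f' := fun s => g ((1 - s) • μ + s • ν) / (1 - s) - c)
    (hcont.sub (by fun_prop))
    (fun s hs => by
      have hd := hasDerivWithinAt_seg (F := F) (μ := μ) (ν := ν) (hs.2.trans_le h1)
        (hg _ (seg_mem hμ hν hs.1 (hs.2.le.trans h1)))
      have hl : HasDerivWithinAt (fun r : ℝ => r * c) c (Set.Ici s) s := by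
        simpa using (hasDerivWithinAt_id s (Set.Ici s)).mul_const c
      exact hd.sub hl)
    (fun s hs => hM s hs.1 hs.2) ε ⟨h0, le_rfl⟩
  simp only [sub_zero, one_smul, zero_smul, add_zero, zero_mul, Real.norm_eq_abs] at this
  rwa [sub_right_comm] at this

theorem seg_sub {d : ℕ} (μ ν : Fin d → ℝ) (s : ℝ) : (1 - s) • μ + s • ν - μ = s • (ν - μ) := by
  ext x
  simp only [Pi.add_apply, Pi.sub_apply, Pi.smul_apply, smul_eq_mul]
  ring

/-- The one-sided derivatives towards the vertices hold with an error that is quadratic,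
uniformly in the base point. -/
theorem vertex_taylor {d : ℕ} {K : ℝ} {F : (Fin d → ℝ) → ℝ} {δF : (Fin d → ℝ) → Fin d → ℝ}
    (hF : DLipK K F δF) {μ : Fin d → ℝ} (hμ : μ ∈ simplex d) (z : Fin d) {ε : ℝ} (h0 : 0 ≤ ε)
    (h1 : ε ≤ 1 / 2) :
    |F ((1 - ε) • μ + ε • bvec z) - F μ - ε * δF μ z| ≤ 6 * K * ε * ε := by
  have hz := bvec_mem z
  refine seg_taylor hF hμ hz (fun p => δF p z) (fun p hp => hF.deriv p hp z) h0 (by linarith) ?_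
  intro s hs hsε
  have hp : (1 - s) • μ + s • bvec z ∈ simplex d := seg_mem hμ hz hs (by linarith)
  have a := hF.lip' _ hp μ hμ z
  rw [seg_sub, norm_smul, Real.norm_eq_abs, abs_of_nonneg hs] at a
  have b := (hF.bdd μ hμ z).2
  have n := simplex_sub_norm_le hz hμ
  have hK := hF.nonneg
  set D := δF ((1 - s) • μ + s • bvec z) z
  have e : D / (1 - s) - δF μ z = ((D - δF μ z) + s * δF μ z) / (1 - s) := by
    have : (1 - s) ≠ 0 := by linarith
    field_simp
    ring
  rw [e, abs_div, abs_of_pos (by linarith : 0 < 1 - s), div_le_iff₀ (by linarith)]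
  have a' : |D - δF μ z| ≤ K * (s * 2) :=
    a.trans (mul_le_mul_of_nonneg_left (mul_le_mul_of_nonneg_left n hs) hK)
  have b' : |s * δF μ z| ≤ s * K := by
    rw [abs_mul, abs_of_nonneg hs]
    exact mul_le_mul_of_nonneg_left b hs
  have t := abs_add_le (D - δF μ z) (s * δF μ z)
  have hKε : K * s ≤ K * ε := mul_le_mul_of_nonneg_left hsε.le hK
  have : 0 ≤ K * ε := mul_nonneg hK h0
  have : K * ε * (1 / 2) ≤ K * ε * (1 - s) := mul_le_mul_of_nonneg_left (by linarith) this
  nlinarith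

/-- A step towards a combination of vertices is, up to `O(ε²)`, the composition of the steps
towards the single vertices, so the first-order terms add up. -/
theorem partial_taylor {d : ℕ} {K : ℝ} {F : (Fin d → ℝ) → ℝ} {δF : (Fin d → ℝ) → Fin d → ℝ}
    (hF : DLipK K F δF) (S : Finset (Fin d)) (w : Fin d → ℝ) (hw : w ∈ simplex d) :
    ∃ C : ℝ, ∀ μ ∈ simplex d, ∀ ε : ℝ, 0 ≤ ε → ε ≤ 1 / 2 →
      |F ((1 - ε * ∑ z ∈ S, w z) • μ + ε • ∑ z ∈ S, w z • bvec z) - F μ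
        - ε * ∑ z ∈ S, w z * δF μ z| ≤ C * ε ^ 2 := by
  have mem : ∀ S : Finset (Fin d), ∀ μ ∈ simplex d, ∀ ε : ℝ, 0 ≤ ε → ε ≤ 1 / 2 →
      (1 - ε * ∑ z ∈ S, w z) • μ + ε • ∑ z ∈ S, w z • bvec z ∈ simplex d := by
    intro S μ hμ ε h0 h1
    have hW : ∑ z ∈ S, w z ≤ 1 := by
      rw [← hw.2]
      exact Finset.sum_le_sum_of_subset_of_nonneg (Finset.subset_univ S) fun z _ _ => hw.1 z
    have hW0 : 0 ≤ ∑ z ∈ S, w z := Finset.sum_nonneg fun z _ => hw.1 z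
    refine ⟨fun x => ?_, ?_⟩
    · simp only [Pi.add_apply, Pi.smul_apply, smul_eq_mul, Finset.sum_apply]
      refine add_nonneg (mul_nonneg (by nlinarith) (hμ.1 x)) (mul_nonneg h0 ?_)
      exact Finset.sum_nonneg fun z _ => mul_nonneg (hw.1 z) ((bvec_mem z).1 x)
    · simp only [Pi.add_apply, Pi.smul_apply, smul_eq_mul, Finset.sum_apply,
        Finset.sum_add_distrib, ← Finset.mul_sum, hμ.2]
      rw [Finset.sum_comm]
      simp only [← Finset.mul_sum, (bvec_mem _).2, mul_one]
      ring
  induction S using Finset.induction_on with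
  | empty => exact ⟨0, fun μ _ ε _ _ => by simp⟩
  | insert a S ha ih =>
    obtain ⟨C, hC⟩ := ih
    have hK := hF.nonneg
    have hwa : 0 ≤ w a := hw.1 a
    have hwa1 : w a ≤ 1 := by simpa [abs_of_nonneg hwa] using
      (abs_apply_le w a).trans (simplex_norm_le hw)
    refine ⟨C + 2 * K + 6 * K + 2 * K, fun μ hμ ε h0 h1 => ?_⟩
    have hQ := mem S μ hμ ε h0 h1
    have hP := mem (insert a S) μ hμ ε h0 h1
    have h2 := hC μ hμ ε h0 h1
    rw [Finset.sum_insert ha, Finset.sum_insert ha, Finset.sum_insert ha] at *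
    set W := ∑ z ∈ S, w z with hWdef
    set V := ∑ z ∈ S, w z • bvec z with hVdef
    set G := ∑ z ∈ S, w z * δF μ z
    have hQμ : ‖(1 - ε * W) • μ + ε • V - μ‖ ≤ 2 * ε := by
      have hW : W ≤ 1 := by
        rw [← hw.2]
        exact Finset.sum_le_sum_of_subset_of_nonneg (Finset.subset_univ S) fun z _ _ => hw.1 z
      have hW0 : 0 ≤ W := Finset.sum_nonneg fun z _ => hw.1 z
      have hV : ‖V‖ ≤ W := by
        refine (norm_sum_le _ _).trans (Finset.sum_le_sum fun z _ => ?_)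
        rw [norm_smul, Real.norm_eq_abs, abs_of_nonneg (hw.1 z)]
        exact mul_le_of_le_one_right (hw.1 z) (simplex_norm_le (bvec_mem z))
      have : (1 - ε * W) • μ + ε • V - μ = ε • (V - W • μ) := by
        ext x
        simp only [Pi.add_apply, Pi.sub_apply, Pi.smul_apply, smul_eq_mul]
        ring
      rw [this, norm_smul, Real.norm_eq_abs, abs_of_nonneg h0, mul_comm]
      refine mul_le_mul_of_nonneg_right ?_ h0
      have h3 := norm_sub_le V (W • μ)
      rw [norm_smul, Real.norm_eq_abs, abs_of_nonneg hW0] at h3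
      have := mul_le_of_le_one_right hW0 (simplex_norm_le hμ)
      linarith
    set Q := (1 - ε * W) • μ + ε • V with hQdef
    have hεa0 : 0 ≤ ε * w a := mul_nonneg h0 hwa
    have hεa : ε * w a ≤ ε := mul_le_of_le_one_right h0 hwa1
    have h3 := vertex_taylor hF hQ a hεa0 (hεa.trans h1)
    have hR := seg_mem hQ (bvec_mem a) hεa0 (by linarith)
    have h4 := hF.lip _ hP _ hR
    have e : (1 - ε * (w a + W)) • μ + ε • (w a • bvec a + V)
        - ((1 - ε * w a) • Q + (ε * w a) • bvec a) = (ε * w a) • (Q - μ) := by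
      ext x
      simp only [hQdef, Pi.add_apply, Pi.sub_apply, Pi.smul_apply, smul_eq_mul]
      ring
    rw [e, norm_smul, Real.norm_eq_abs, abs_of_nonneg hεa0] at h4
    have h5 := hF.lip' _ hQ μ hμ a
    have h6 : |ε * w a * (δF Q a - δF μ a)| ≤ ε * (K * (2 * ε)) := by
      rw [abs_mul, abs_of_nonneg hεa0]
      exact mul_le_mul hεa (h5.trans (mul_le_mul_of_nonneg_left hQμ hK)) (abs_nonneg _) h0
    have h7 : K * (ε * w a * ‖Q - μ‖) ≤ K * (ε * (2 * ε)) :=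
      mul_le_mul_of_nonneg_left (mul_le_mul hεa hQμ (norm_nonneg _) h0) hK
    have h8 : 6 * K * (ε * w a) * (ε * w a) ≤ 6 * K * ε * ε := by
      have := mul_le_mul hεa hεa hεa0 h0
      nlinarith
    have h4' := h4.trans h7
    have h3' := h3.trans h8
    rw [abs_le] at *
    constructor <;> nlinarith

/-- The one-sided derivative towards an arbitrary point of the simplex. -/
theorem dir_deriv {d : ℕ} {K : ℝ} {F : (Fin d → ℝ) → ℝ} {δF : (Fin d → ℝ) → Fin d → ℝ}
    (hF : DLipK K F δF) {μ ν : Fin d → ℝ} (hμ : μ ∈ simplex d) (hν : ν ∈ simplex d) :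
    Tendsto (fun ε : ℝ => (F ((1 - ε) • μ + ε • ν) - F μ) / ε) (𝓝[>] 0)
      (𝓝 (∑ z, ν z * δF μ z)) := by
  obtain ⟨C, hC⟩ := partial_taylor hF Finset.univ ν hν
  have hv : ∑ z, ν z • bvec z = ν := by
    ext x
    simp [bvec, Finset.sum_apply]
  simp only [hν.2, mul_one, hv] at hC
  rw [tendsto_iff_norm_sub_tendsto_zero]
  have hlim : Tendsto (fun ε : ℝ => C * ε) (𝓝[>] 0) (𝓝 0) := by
    have : Continuous fun ε : ℝ => C * ε := by fun_prop
    have h2 := this.tendsto 0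
    simp only [mul_zero] at h2
    exact h2.mono_left nhdsWithin_le_nhds
  refine squeeze_zero' (.of_forall fun _ => norm_nonneg _) ?_ hlim
  filter_upwards [Ioc_mem_nhdsGT (show (0:ℝ) < 1 / 2 by norm_num)] with ε hε
  have h := hC μ hμ ε hε.1.le hε.2
  have hε0 := hε.1
  have e : (F ((1 - ε) • μ + ε • ν) - F μ) / ε - ∑ z, ν z * δF μ z
      = (F ((1 - ε) • μ + ε • ν) - F μ - ε * ∑ z, ν z * δF μ z) / ε := by
    field_simp
  rw [e, Real.norm_eq_abs, abs_div, abs_of_pos hε0, div_le_iff₀ hε0]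
  linarith

/-- The linear functional derivative is centred: there is no change in moving from `μ`
towards `μ`. -/
theorem centred {d : ℕ} {K : ℝ} {F : (Fin d → ℝ) → ℝ} {δF : (Fin d → ℝ) → Fin d → ℝ}
    (hF : DLipK K F δF) {μ : Fin d → ℝ} (hμ : μ ∈ simplex d) : ∑ z, μ z * δF μ z = 0 := by
  refine tendsto_nhds_unique (dir_deriv hF hμ hμ) ?_
  simp [← add_smul]

/-- Functions in (D-Lip) have a quadratic Taylor remainder on the whole simplex, including its
boundary. -/
theorem taylor {d : ℕ} {K : ℝ} {F : (Fin d → ℝ) → ℝ} {δF : (Fin d → ℝ) → Fin d → ℝ}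
    (hF : DLipK K F δF) {μ ν : Fin d → ℝ} (hμ : μ ∈ simplex d) (hν : ν ∈ simplex d) :
    |F ν - F μ - ∑ z, (ν - μ) z * δF μ z| ≤ d * K * ‖ν - μ‖ ^ 2 := by
  have h := seg_taylor hF hμ hν (fun p => ∑ z, ν z * δF p z) (fun p hp => dir_deriv hF hp hν)
    (ε := 1) (c := ∑ z, (ν - μ) z * δF μ z) (M := d * K * ‖ν - μ‖ ^ 2) zero_le_one le_rfl ?_
  · simpa using h
  intro s h0 h1
  have hp := seg_mem hμ hν h0 h1.le
  have hc := centred hF hp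
  set p := (1 - s) • μ + s • ν with hpdef
  have hs : (1 - s) ≠ 0 := by linarith
  have e : (∑ z, ν z * δF p z) / (1 - s) = ∑ z, (ν - μ) z * δF p z := by
    rw [div_eq_iff hs, Finset.sum_mul, ← sub_zero (∑ z, ν z * δF p z), ← hc,
      ← Finset.sum_sub_distrib]
    refine Finset.sum_congr rfl fun z _ => ?_
    simp only [hpdef, Pi.add_apply, Pi.sub_apply, Pi.smul_apply, smul_eq_mul]
    ring
  rw [e, ← Finset.sum_sub_distrib]
  simp only [← mul_sub]
  have hb : ∀ z, |δF p z - δF μ z| ≤ K * ‖ν - μ‖ := fun z => by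
    refine (hF.lip' p hp μ hμ z).trans (mul_le_mul_of_nonneg_left ?_ hF.nonneg)
    rw [hpdef, seg_sub, norm_smul, Real.norm_eq_abs, abs_of_nonneg h0]
    exact mul_le_of_le_one_left (norm_nonneg _) h1.le
  refine (abs_sum_mul_le (ν - μ) (fun z => δF p z - δF μ z) (norm_nonneg _)
    (abs_apply_le _) hb).trans (le_of_eq ?_)
  ring

/-! ### The linearized Kolmogorov operator -/

theorem linOp_apply {d : ℕ} (α : (Fin d → ℝ) → Matrix (Fin d) (Fin d) ℝ)
    (δα : (Fin d → ℝ) → Fin d → Matrix (Fin d) (Fin d) ℝ) (η q : Fin d → ℝ) (y : Fin d) :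
    linOp α δα η q y = ∑ x, η x * (∑ z, q z * δα η z x y) + ∑ x, q x * α η x y := by
  simp [linOp, Matrix.vecMul, dotProduct, Matrix.sum_apply]

theorem linOp_sub {d : ℕ} (α : (Fin d → ℝ) → Matrix (Fin d) (Fin d) ℝ)
    (δα : (Fin d → ℝ) → Fin d → Matrix (Fin d) (Fin d) ℝ) (η q q' : Fin d → ℝ) :
    linOp α δα η (q - q') = linOp α δα η q - linOp α δα η q' := by
  ext y
  simp only [linOp_apply, Pi.sub_apply, sub_mul, Finset.sum_sub_distrib, mul_sub]
  ring

theorem linOp_smul {d : ℕ} (α : (Fin d → ℝ) → Matrix (Fin d) (Fin d) ℝ)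
    (δα : (Fin d → ℝ) → Fin d → Matrix (Fin d) (Fin d) ℝ) (η q : Fin d → ℝ) (c : ℝ) :
    linOp α δα η (c • q) = c • linOp α δα η q := by
  ext y
  simp only [linOp_apply, Pi.smul_apply, smul_eq_mul, mul_add, Finset.mul_sum]
  congr 1
  · exact Finset.sum_congr rfl fun _ _ => Finset.sum_congr rfl fun _ _ => by ring
  · exact Finset.sum_congr rfl fun _ _ => by ring

/-- All rates are in (D-Lip) with a common constant. -/
theorem exists_common {d : ℕ} {α : (Fin d → ℝ) → Matrix (Fin d) (Fin d) ℝ}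
    {δα : (Fin d → ℝ) → Fin d → Matrix (Fin d) (Fin d) ℝ} (h : DLipRate α δα) :
    ∃ K, 1 ≤ K ∧ ∀ x y, DLipK K (fun μ => α μ x y) (fun μ z => δα μ z x y) := by
  choose K hK using fun x y => (h x y).exists_dLipK
  refine ⟨1 + ∑ x, ∑ y, |K x y|, ?_, fun x y => hK x y _ ?_⟩
  · linarith [Finset.sum_nonneg fun x (_ : x ∈ Finset.univ) =>
      Finset.sum_nonneg fun y (_ : y ∈ Finset.univ) => abs_nonneg (K x y)]
  · have h1 : |K x y| ≤ ∑ y, |K x y| :=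
      Finset.single_le_sum (f := fun y => |K x y|) (fun _ _ => abs_nonneg _) (Finset.mem_univ y)
    have h2 : ∑ y, |K x y| ≤ ∑ x, ∑ y, |K x y| :=
      Finset.single_le_sum (f := fun x => ∑ y, |K x y|)
        (fun _ _ => Finset.sum_nonneg fun _ _ => abs_nonneg _) (Finset.mem_univ x)
    linarith [le_abs_self (K x y)]

section field

variable {d : ℕ} {K : ℝ} {α : (Fin d → ℝ) → Matrix (Fin d) (Fin d) ℝ}
  {δα : (Fin d → ℝ) → Fin d → Matrix (Fin d) (Fin d) ℝ}

theorem linOp_norm_le (hK : ∀ x y, DLipK K (fun μ => α μ x y) (fun μ z => δα μ z x y))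
    (hK0 : 0 ≤ K) {η : Fin d → ℝ} (hη : η ∈ simplex d) (q : Fin d → ℝ) :
    ‖linOp α δα η q‖ ≤ (d * (d * K) + d * K) * ‖q‖ := by
  refine (pi_norm_le_iff_of_nonneg (by positivity)).2 fun y => ?_
  rw [linOp_apply, Real.norm_eq_abs]
  refine (abs_add_le _ _).trans ?_
  have h1 := abs_sum_mul_le η (fun x => ∑ z, q z * δα η z x y) zero_le_one
    (fun x => (abs_apply_le η x).trans (simplex_norm_le hη))
    (fun x => abs_sum_mul_le q (fun z => δα η z x y) (norm_nonneg q) (abs_apply_le q)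
      (fun z => ((hK x y).bdd η hη z).2))
  have h2 := abs_sum_mul_le q (fun x => α η x y) (norm_nonneg q) (abs_apply_le q)
      (fun x => ((hK x y).bdd η hη x).1)
  refine (add_le_add h1 h2).trans (le_of_eq ?_)
  ring

/-- `L_η` is the derivative at `η` of the vector field `η ↦ η α(η)`, with quadratic remainder. -/
theorem field_taylor (hK : ∀ x y, DLipK K (fun μ => α μ x y) (fun μ z => δα μ z x y))
    (hK0 : 0 ≤ K) {η ν : Fin d → ℝ} (hη : η ∈ simplex d) (hν : ν ∈ simplex d) :
    ‖Matrix.vecMul ν (α ν) - Matrix.vecMul η (α η) - linOp α δα η (ν - η)‖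
      ≤ (d * K + d * (d * K)) * ‖ν - η‖ ^ 2 := by
  refine (pi_norm_le_iff_of_nonneg (by positivity)).2 fun y => ?_
  have e : (Matrix.vecMul ν (α ν) - Matrix.vecMul η (α η) - linOp α δα η (ν - η)) y
      = ∑ x, (ν - η) x * (α ν x y - α η x y)
        + ∑ x, η x * (α ν x y - α η x y - ∑ z, (ν - η) z * δα η z x y) := by
    simp only [Pi.sub_apply, linOp_apply, Matrix.vecMul, dotProduct]
    rw [← Finset.sum_sub_distrib, ← Finset.sum_add_distrib, ← Finset.sum_sub_distrib,
      ← Finset.sum_add_distrib]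
    exact Finset.sum_congr rfl fun x _ => by ring
  rw [e, Real.norm_eq_abs]
  refine (abs_add_le _ _).trans ?_
  have h1 := abs_sum_mul_le (ν - η) (fun x => α ν x y - α η x y) (norm_nonneg _) (abs_apply_le _)
    (fun x => (hK x y).lip ν hν η hη)
  have h2 := abs_sum_mul_le η (fun x => α ν x y - α η x y - ∑ z, (ν - η) z * δα η z x y)
    zero_le_one (fun x => (abs_apply_le η x).trans (simplex_norm_le hη))
    (fun x => taylor (hK x y) hη hν)
  refine (add_le_add h1 h2).trans (le_of_eq ?_)
  ring

theorem field_lip (hK : ∀ x y, DLipK K (fun μ => α μ x y) (fun μ z => δα μ z x y))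
    (hK0 : 0 ≤ K) {η ν : Fin d → ℝ} (hη : η ∈ simplex d) (hν : ν ∈ simplex d) :
    ‖Matrix.vecMul ν (α ν) - Matrix.vecMul η (α η)‖ ≤ (2 * (d * K)) * ‖ν - η‖ := by
  refine (pi_norm_le_iff_of_nonneg (by positivity)).2 fun y => ?_
  have e : (Matrix.vecMul ν (α ν) - Matrix.vecMul η (α η)) y
      = ∑ x, (ν - η) x * α ν x y + ∑ x, η x * (α ν x y - α η x y) := by
    simp only [Pi.sub_apply, Matrix.vecMul, dotProduct]
    rw [← Finset.sum_sub_distrib, ← Finset.sum_add_distrib]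
    exact Finset.sum_congr rfl fun x _ => by ring
  rw [e, Real.norm_eq_abs]
  refine (abs_add_le _ _).trans ?_
  have h1 := abs_sum_mul_le (ν - η) (fun x => α ν x y) (norm_nonneg _) (abs_apply_le _)
    (fun x => ((hK x y).bdd ν hν x).1)
  have h2 := abs_sum_mul_le η (fun x => α ν x y - α η x y)
    zero_le_one (fun x => (abs_apply_le η x).trans (simplex_norm_le hη))
    (fun x => (hK x y).lip ν hν η hη)
  refine (add_le_add h1 h2).trans (le_of_eq ?_)
  ring

end field

/-! ### The flow and its linearization -/

/-- Grönwall's inequality on `[0, T]` with a right-hand side linear in the data. -/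
theorem gronwall_linear {d : ℕ} {B : ℝ} (hB : 0 < B) (T : ℝ) :
    ∃ C, 0 ≤ C ∧ ∀ (f f' : ℝ → Fin d → ℝ) (a b : ℝ), 0 ≤ a → 0 ≤ b →
      (∀ t, 0 ≤ t → HasDerivAt f (f' t) t) → ‖f 0‖ ≤ a →
      (∀ t, 0 ≤ t → t ≤ T → ‖f' t‖ ≤ B * ‖f t‖ + b) →
      ∀ t, 0 ≤ t → t ≤ T → ‖f t‖ ≤ C * (a + b) := by
  refine ⟨Real.exp (B * T) * (1 + 1 / B), by positivity, ?_⟩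
  intro f f' a b ha hb hf h0 hbd t ht hT
  have := norm_le_gronwallBound_of_norm_deriv_right_le (f := f) (f' := f') (δ := a) (K := B)
    (ε := b) (a := 0) (b := T) (fun s hs => (hf s hs.1).continuousAt.continuousWithinAt)
    (fun s hs => (hf s hs.1).hasDerivWithinAt) h0 (fun s hs => hbd s hs.1 hs.2.le) t ⟨ht, hT⟩
  rw [gronwallBound_of_K_ne_0 hB.ne', sub_zero] at this
  have hexp : Real.exp (B * t) ≤ Real.exp (B * T) :=
    Real.exp_le_exp.2 (mul_le_mul_of_nonneg_left hT hB.le)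
  have hE := Real.exp_pos (B * T)
  have hi : 0 < 1 / B := by positivity
  refine this.trans ?_
  have h1 : a * Real.exp (B * t) ≤ a * Real.exp (B * T) := mul_le_mul_of_nonneg_left hexp ha
  have h2 : b / B * (Real.exp (B * t) - 1) ≤ b * (1 / B) * Real.exp (B * T) := by
    rw [div_eq_mul_one_div]
    exact mul_le_mul_of_nonneg_left (by linarith) (by positivity)
  have h3 : 0 ≤ a * (1 / B) * Real.exp (B * T) := by positivity
  have h4 : 0 ≤ b * Real.exp (B * T) := by positivity
  linarith

/-- The linear functional derivative of the measure flow exists and is realized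
by the solution of the linearized Cauchy problem: `δm/δm(t,μ,z) = m⁽¹⁾(t,μ,δ_z)`. -/
theorem flow_derivative_is_linearized_solution {d : ℕ} (hd : 1 < d)
    (α : (Fin d → ℝ) → Matrix (Fin d) (Fin d) ℝ)
    (δα : (Fin d → ℝ) → Fin d → Matrix (Fin d) (Fin d) ℝ)
    (hα : IsRate d α) (hαD : DLipRate α δα)
    (m : ℝ → (Fin d → ℝ) → Fin d → ℝ) (hm : IsFlow α m)
    (m1 : ℝ → (Fin d → ℝ) → (Fin d → ℝ) → Fin d → ℝ)
    (hm1 : ∀ μ ∈ simplex d, ∀ ν ∈ simplex d, m1 0 μ ν = ν - μ ∧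
      ∀ t : ℝ, 0 ≤ t → HasDerivAt (fun s => m1 s μ ν) (linOp α δα (m t μ) (m1 t μ ν)) t) :
    ∀ t : ℝ, 0 ≤ t → ∀ μ ∈ simplex d, ∀ z x,
      HasLFDerivAt (fun ν => m t ν x) μ z (m1 t μ (bvec z) x) := by
  intro T hT μ hμ z x
  obtain ⟨K, hK1, hK⟩ := exists_common hαD
  have hK0 : 0 ≤ K := by linarith
  have hz := bvec_mem z
  obtain ⟨hm0, hmS, hmD⟩ := hm μ hμ
  obtain ⟨hq0, hqD⟩ := hm1 μ hμ _ hz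
  have hdpos : (0:ℝ) < d := by
    have : 0 < d := by omega
    exact_mod_cast this
  have hKpos : 0 < K := by linarith
  obtain ⟨C₁, hC₁, g₁⟩ := gronwall_linear (d := d) (B := 2 * (d * K)) (by positivity) T
  obtain ⟨C₂, hC₂, g₂⟩ := gronwall_linear (d := d) (B := d * (d * K) + d * K) (by positivity) T
  set A := d * K + d * (d * K) with hA
  have hA0 : 0 ≤ A := by positivity
  -- The remainder `m(T; μ_ε) - m(T; μ) - ε q(T)` is quadratic in `ε`.
  have main : ∀ ε : ℝ, 0 ≤ ε → ε ≤ 1 →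
      ‖m T ((1 - ε) • μ + ε • bvec z) - m T μ - ε • m1 T μ (bvec z)‖
        ≤ C₂ * (A * (C₁ * (2 * ε)) ^ 2) := by
    intro ε h0 h1
    have hμε := seg_mem hμ hz h0 h1
    have hsub := seg_sub μ (bvec z) ε
    set με := (1 - ε) • μ + ε • bvec z
    obtain ⟨hn0, hnS, hnD⟩ := hm με hμε
    have close : ∀ t, 0 ≤ t → t ≤ T → ‖m t με - m t μ‖ ≤ C₁ * (2 * ε) := by
      intro t ht htT
      have := g₁ (fun s => m s με - m s μ) _ (2 * ε) 0 (by linarith) le_rfl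
        (fun s hs => (hnD s hs).sub (hmD s hs))
        (by
          rw [hn0, hm0, hsub, norm_smul, Real.norm_eq_abs, abs_of_nonneg h0, mul_comm]
          exact mul_le_mul_of_nonneg_right (simplex_sub_norm_le hz hμ) h0)
        (fun s hs _ => by
          rw [add_zero]
          exact field_lip hK hK0 (hmS s hs) (hnS s hs)) t ht htT
      simpa using this
    have := g₂ (fun s => m s με - m s μ - ε • m1 s μ (bvec z)) _ 0 (A * (C₁ * (2 * ε)) ^ 2)
      le_rfl (by positivity)
      (fun s hs => ((hnD s hs).sub (hmD s hs)).sub ((hqD s hs).const_smul ε))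
      (by rw [hn0, hm0, hq0, hsub, sub_self, norm_zero])
      (fun s hs hsT => by
        have e : Matrix.vecMul (m s με) (α (m s με)) - Matrix.vecMul (m s μ) (α (m s μ))
            - ε • linOp α δα (m s μ) (m1 s μ (bvec z))
            = linOp α δα (m s μ) (m s με - m s μ - ε • m1 s μ (bvec z))
              + (Matrix.vecMul (m s με) (α (m s με)) - Matrix.vecMul (m s μ) (α (m s μ))
                - linOp α δα (m s μ) (m s με - m s μ)) := by
          rw [linOp_sub _ _ _ (m s με - m s μ), linOp_smul]
          abel
        rw [e]
        refine (norm_add_le _ _).trans (add_le_add (linOp_norm_le hK hK0 (hmS s hs) _) ?_)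
        refine (field_taylor hK hK0 (hmS s hs) (hnS s hs)).trans ?_
        exact mul_le_mul_of_nonneg_left
          (pow_le_pow_left₀ (norm_nonneg _) (close s hs hsT) 2) hA0) T hT le_rfl
    simpa using this
  unfold HasLFDerivAt
  rw [tendsto_iff_norm_sub_tendsto_zero]
  have hlim : Tendsto (fun ε : ℝ => C₂ * (A * (C₁ * 2) ^ 2) * ε) (𝓝[>] 0) (𝓝 0) := by
    have : Continuous fun ε : ℝ => C₂ * (A * (C₁ * 2) ^ 2) * ε := by fun_prop
    have h2 := this.tendsto 0
    simp only [mul_zero] at h2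
    exact h2.mono_left nhdsWithin_le_nhds
  refine squeeze_zero' (.of_forall fun _ => norm_nonneg _) ?_ hlim
  filter_upwards [Ioc_mem_nhdsGT (zero_lt_one (α := ℝ))] with ε hε
  have h := (abs_apply_le _ x).trans (main ε hε.1.le hε.2)
  have hε0 := hε.1
  simp only [Pi.sub_apply, Pi.smul_apply, smul_eq_mul] at h
  set P := m T ((1 - ε) • μ + ε • bvec z) x
  have e : (P - m T μ x) / ε - m1 T μ (bvec z) x
      = (P - m T μ x - ε * m1 T μ (bvec z) x) / ε := by
    field_simp
  rw [e, Real.norm_eq_abs, abs_div, abs_of_pos hε0, div_le_iff₀ hε0]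
  refine h.trans (le_of_eq ?_)
  ring
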